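/- arXiv:0704.0564 — 2 statements merged into one kernel-verified Lean document; each statement's English description precedes it below -/
import Mathlib

section
/- Let P ∈ ℂ[X₁,…,Xₙ] be a polynomial of degree d. The difference Δ_P(s) := Σ'_{k∈ℤⁿ} P(k)/|k|^s − ∫_{ℝⁿ∖Bⁿ} P(x)/|x|^s dx, which is defined for Re(s) > d + n, extends to a holomorphic (entire) function on the whole complex plane ℂ. -/
open Filter Topology MeasureTheory

noncomputable section

/-- Euclidean norm of an integer vector `k ∈ ℤⁿ`. -/
def znorm {n : ℕ} (k : Fin n → ℤ) : ℝ := Real.sqrt (∑ i, ((k i : ℝ)) ^ 2)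

/-- The general term of the series `Σ'_{k∈ℤⁿ} P(k)/|k|^s`,
with the term at `k = 0` omitted. -/
def zetaPTerm {n : ℕ} (P : MvPolynomial (Fin n) ℂ) (s : ℂ) (k : Fin n → ℤ) : ℂ :=
  if k = 0 then 0 else MvPolynomial.eval (fun i => ((k i : ℤ) : ℂ)) P / ((znorm k : ℂ) ^ s)

/-!
By linearity it suffices to treat monomials `x ^ m`, of degree `d`. Poisson summation makes the
theta series `∑ k, k ^ m exp (-π |k|² t)`, a product of one-variable lattice sums, part of a weak
FE-pair. For `Re s > d + n` its Mellin transform `Λ` at `(s - d) / 2` is `Γℝ(s)` times the sum of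
`k ^ m / |k| ^ s` over `k ≠ 0`, and `Λ` continues to `ℂ` with at most two poles. The pole at
`s = 0`, present only for `d = 0`, is cancelled by the zero of `1 / Γℝ`. In polar coordinates, the
residue at the pole `s = d + n` (a Gaussian integral) is `Γℝ(d + n)` times the integral `S` of
`x ^ m` over the unit sphere, while the exterior integral equals `S / (s - (d + n))`. Hence the
poles of `Λ / Γℝ` and of the exterior integral cancel, leaving a difference quotient of `1 / Γℝ`.
-/

open scoped FourierTransform SchwartzMap

section Products

theorem isBigO_prod_sub_prod {α ι R : Type*} [NormedCommRing R] {l : Filter α} {g : α → ℝ}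
    (hg : g =O[l] (1 : α → ℝ)) (s : Finset ι) {u : ι → α → R} {c : ι → R}
    (h : ∀ i ∈ s, (fun t ↦ u i t - c i) =O[l] g) :
    (fun t ↦ ∏ i ∈ s, u i t - ∏ i ∈ s, c i) =O[l] g := by
  classical
  induction s using Finset.induction_on with
  | empty => simpa using Asymptotics.isBigO_zero g l
  | insert a s ha ih =>
    have hs := ih fun i hi ↦ h i (Finset.mem_insert_of_mem hi)
    have ha' := h a (Finset.mem_insert_self a s)
    have hu : u a =O[l] (1 : α → ℝ) := by
      simpa using (ha'.trans hg).add (Asymptotics.isBigO_const_const (c a) (one_ne_zero (α := ℝ)) l)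
    have hsplit : (fun t ↦ ∏ i ∈ insert a s, u i t - ∏ i ∈ insert a s, c i) = fun t ↦
        u a t * (∏ i ∈ s, u i t - ∏ i ∈ s, c i) + (∏ i ∈ s, c i) * (u a t - c a) := by
      ext t
      rw [Finset.prod_insert ha, Finset.prod_insert ha]
      ring
    rw [hsplit]
    exact (by simpa using hu.mul hs : _ =O[l] g).add (ha'.const_mul_left _)

theorem summable_norm_and_hasSum_pi_prod {κ R : Type*} [NormedCommRing R] [CompleteSpace R]
    {n : ℕ} {f : Fin n → κ → R} (hf : ∀ i, Summable fun k ↦ ‖f i k‖) :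
    Summable (fun k : Fin n → κ ↦ ‖∏ i, f i (k i)‖) ∧
      HasSum (fun k : Fin n → κ ↦ ∏ i, f i (k i)) (∏ i, ∑' k, f i k) := by
  induction n with
  | zero => exact ⟨Summable.of_finite, by simp⟩
  | succ n ih =>
    obtain ⟨htail, htail_sum⟩ := ih fun i ↦ hf i.succ
    have hmul_summable := summable_mul_of_summable_norm (hf 0) htail
    have hmul := (hf 0).of_norm.hasSum.mul htail_sum hmul_summable
    constructor
    · rw [← (Fin.consEquiv fun _ : Fin (n + 1) ↦ κ).summable_iff]
      simpa [Function.comp_def, Fin.prod_univ_succ] using (hf 0).mul_norm htail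
    · rw [← (Fin.consEquiv fun _ : Fin (n + 1) ↦ κ).hasSum_iff]
      simpa [Function.comp_def, Fin.prod_univ_succ] using hmul

end Products

section IntSum

variable {F : Type*} [NormedAddCommGroup F] [NormedSpace ℝ F]

/-- The sum of a Schwartz function over the scaled lattice `r ℤ`. -/
def intSum (f : 𝓢(ℝ, F)) (r : ℝ) : F := ∑' k : ℤ, f (r * k)

theorem exists_norm_schwartz_mul_int_le (f : 𝓢(ℝ, F)) (N : ℕ) :
    ∃ C, ∀ r : ℝ, 0 < r → ∀ k : ℤ, k ≠ 0 →
      ‖f (r * k)‖ ≤ C * (r ^ N)⁻¹ * (|(k : ℝ)| ^ N)⁻¹ := by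
  obtain ⟨C, -, hC⟩ := f.decay N 0
  refine ⟨C, fun r hr k hk ↦ ?_⟩
  have : (0 : ℝ) < |(k : ℝ)| := by positivity
  have h := hC (r * k)
  rw [norm_iteratedFDeriv_zero, norm_mul, Real.norm_of_nonneg hr.le, Real.norm_eq_abs,
    mul_pow] at h
  rw [mul_assoc, ← mul_inv, ← div_eq_mul_inv, le_div_iff₀' (by positivity)]
  exact h

theorem summable_abs_int_pow_inv {N : ℕ} (hN : 1 < N) :
    Summable fun k : ℤ ↦ (|(k : ℝ)| ^ N)⁻¹ :=
  (Real.summable_abs_int_rpow (b := N) (by exact_mod_cast hN)).congr fun k ↦ by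
    rw [Real.rpow_neg (abs_nonneg _), Real.rpow_natCast]

theorem summable_norm_schwartz_mul_int (f : 𝓢(ℝ, F)) {r : ℝ} (hr : 0 < r) :
    Summable fun k : ℤ ↦ ‖f (r * k)‖ := by
  obtain ⟨C, hC⟩ := exists_norm_schwartz_mul_int_le f 2
  refine .of_norm_bounded_eventually
    (g := fun k : ℤ ↦ C * (r ^ 2)⁻¹ * (|(k : ℝ)| ^ 2)⁻¹)
    ((summable_abs_int_pow_inv one_lt_two).mul_left _) ?_
  filter_upwards [eventually_cofinite_ne 0] with k hk
  simpa using hC r hr k hk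

variable [CompleteSpace F]

theorem intSum_eq_add_tsum_ite (f : 𝓢(ℝ, F)) {r : ℝ} (hr : 0 < r) :
    intSum f r = f 0 + ∑' k : ℤ, if k = 0 then 0 else f (r * k) := by
  simpa [intSum] using (summable_norm_schwartz_mul_int f hr).of_norm.tsum_eq_add_tsum_ite 0

theorem exists_norm_intSum_sub_le (f : 𝓢(ℝ, F)) {N : ℕ} (hN : 1 < N) :
    ∃ C, ∀ r : ℝ, 0 < r → ‖intSum f r - f 0‖ ≤ C * (r ^ N)⁻¹ := by
  obtain ⟨C, hC⟩ := exists_norm_schwartz_mul_int_le f N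
  refine ⟨C * ∑' k : ℤ, (|(k : ℝ)| ^ N)⁻¹, fun r hr ↦ ?_⟩
  rw [intSum_eq_add_tsum_ite f hr, add_sub_cancel_left, mul_right_comm, ← tsum_mul_left]
  refine tsum_of_norm_bounded ((summable_abs_int_pow_inv hN).mul_left _).hasSum fun k ↦ ?_
  split_ifs with hk
  · simp [hk, (zero_lt_one.trans hN).ne']
  · exact hC r hr k hk

theorem isBigO_intSum_sqrt_sub (f : 𝓢(ℝ, F)) (x : ℝ) :
    (fun t ↦ intSum f √t - f 0) =O[atTop] (· ^ x) := by
  obtain ⟨N, hN⟩ := exists_nat_gt (max 1 (-x))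
  obtain ⟨C, hC⟩ := exists_norm_intSum_sub_le f (N := 2 * N) (by
    have := (le_max_left _ _).trans_lt hN
    norm_cast at this
    lia)
  refine .of_bound |C| ?_
  filter_upwards [eventually_ge_atTop 1] with t ht
  have ht0 : 0 < t := zero_lt_one.trans_le ht
  rw [Real.norm_of_nonneg (by positivity)]
  calc ‖intSum f √t - f 0‖ ≤ C * (√t ^ (2 * N))⁻¹ := hC _ (Real.sqrt_pos.2 ht0)
    _ ≤ |C| * (√t ^ (2 * N))⁻¹ := by gcongr; exact le_abs_self C
    _ = |C| * t ^ (-N : ℝ) := by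
      rw [pow_mul, Real.sq_sqrt ht0.le, Real.rpow_neg ht0.le, Real.rpow_natCast]
    _ ≤ |C| * t ^ x := by
      gcongr
      linarith [(le_max_right 1 (-x)).trans_lt hN]

theorem continuousOn_intSum (f : 𝓢(ℝ, F)) : ContinuousOn (intSum f) (Set.Ioi 0) := by
  obtain ⟨C, hC⟩ := exists_norm_schwartz_mul_int_le f 2
  have hcont (ε : ℝ) (hε : 0 < ε) :
      ContinuousOn (fun r ↦ ∑' k : ℤ, if k = 0 then 0 else f (r * k)) (Set.Ioi ε) := by
    refine continuousOn_tsum (u := fun k : ℤ ↦ |C| * (ε ^ 2)⁻¹ * (|(k : ℝ)| ^ 2)⁻¹)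
      (fun k ↦ ?_) ((summable_abs_int_pow_inv one_lt_two).mul_left _) fun k r hr ↦ ?_
    · split_ifs
      exacts [continuousOn_const, (f.continuous.comp (by fun_prop)).continuousOn]
    · split_ifs with hk
      · simp [hk]
      · have hr : ε < r := hr
        refine (hC r (hε.trans hr) k hk).trans ?_
        gcongr
        exact le_abs_self C
  refine ContinuousOn.congr (continuousOn_const.add fun r hr ↦ ?_)
    fun r hr ↦ intSum_eq_add_tsum_ite f hr
  have hr' : r / 2 < r := half_lt_self hr
  exact ((hcont (r / 2) (half_pos hr)).continuousAt (Ioi_mem_nhds hr')).continuousWithinAt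

end IntSum

theorem fourier_comp_mul_left (f : ℝ → ℂ) {r : ℝ} (hr : 0 < r) (y : ℝ) :
    𝓕 (fun x ↦ f (r * x)) y = (r : ℂ)⁻¹ * 𝓕 f (y / r) := by
  have h := Measure.integral_comp_mul_left
    (fun v : ℝ ↦ Complex.exp (↑(-2 * Real.pi * inner ℝ v (y / r)) * Complex.I) • f v) r
  rw [abs_of_pos (inv_pos.2 hr)] at h
  rw [Real.fourier_eq', Real.fourier_eq', ← Complex.ofReal_inv, ← Complex.real_smul, ← h]
  congr! 5 with v
  simp only [RCLike.inner_apply, conj_trivial]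
  field_simp

theorem intSum_inv (f : 𝓢(ℝ, ℂ)) {r : ℝ} (hr : 0 < r) :
    intSum f r⁻¹ = r * intSum (𝓕 f) r := by
  let fr : 𝓢(ℝ, ℂ) := SchwartzMap.compCLMOfContinuousLinearEquiv ℂ
    (ContinuousLinearEquiv.smulLeft (Units.mk0 r⁻¹ (inv_ne_zero hr.ne'))) f
  have hfr : (fr : ℝ → ℂ) = fun x ↦ f (r⁻¹ * x) := rfl
  have hfourier (k : ℤ) : 𝓕 fr (k : ℝ) = r * 𝓕 f (r * k) := by
    rw [SchwartzMap.fourier_coe, hfr, fourier_comp_mul_left _ (inv_pos.2 hr),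
      SchwartzMap.fourier_coe, Complex.ofReal_inv, inv_inv, div_inv_eq_mul, mul_comm (k : ℝ)]
  simpa [hfr, hfourier, tsum_mul_left, intSum] using fr.tsum_eq_tsum_fourier 0

section TensorPoisson

variable {ι : Type*} [Fintype ι]

theorem continuousOn_prod_intSum_sqrt (f : ι → 𝓢(ℝ, ℂ)) :
    ContinuousOn (fun t ↦ ∏ i, intSum (f i) √t) (Set.Ioi 0) :=
  continuousOn_finsetProd _ fun i _ ↦ (continuousOn_intSum (f i)).comp
    Real.continuous_sqrt.continuousOn fun _ ht ↦ Real.sqrt_pos.2 ht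

theorem isBigO_prod_intSum_sqrt_sub (f : ι → 𝓢(ℝ, ℂ)) (r : ℝ) :
    (fun t ↦ ∏ i, intSum (f i) √t - ∏ i, f i 0) =O[atTop] (· ^ r) := by
  have hmono {x y : ℝ} (hxy : x ≤ y) : (fun t : ℝ ↦ t ^ x) =O[atTop] (· ^ y) :=
    .of_norm_eventuallyLE <| by
      filter_upwards [eventually_ge_atTop 1] with t ht
      rw [Real.norm_of_nonneg (by positivity)]
      exact Real.rpow_le_rpow_of_exponent_le ht hxy
  have hone : (fun t : ℝ ↦ t ^ min r 0) =O[atTop] (1 : ℝ → ℝ) :=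
    (hmono (min_le_right r 0)).congr_right Real.rpow_zero
  exact (isBigO_prod_sub_prod hone _ fun i _ ↦ isBigO_intSum_sqrt_sub (f i) _).trans
    (hmono (min_le_left r 0))

/-- By Poisson summation, the products of lattice sums of the Schwartz functions `f i` and of their
Fourier transforms, as functions of the square `t` of the lattice scale, form a weak FE-pair whose
weight is half the dimension. -/
def tensorPoissonPair [Nonempty ι] (f : ι → 𝓢(ℝ, ℂ)) : WeakFEPair ℂ where
  f t := ∏ i, intSum (f i) √t
  g t := ∏ i, intSum (𝓕 (f i)) √t
  k := Fintype.card ι / 2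
  ε := 1
  f₀ := ∏ i, f i 0
  g₀ := ∏ i, 𝓕 (f i) 0
  hf_int := (continuousOn_prod_intSum_sqrt f).locallyIntegrableOn measurableSet_Ioi
  hg_int := (continuousOn_prod_intSum_sqrt fun i ↦ 𝓕 (f i)).locallyIntegrableOn measurableSet_Ioi
  hk := by positivity
  hε := one_ne_zero
  h_feq x hx := by
    have hsqrt : (x : ℝ) ^ (Fintype.card ι / 2 : ℝ) = √x ^ Fintype.card ι := by
      rw [Real.sqrt_eq_rpow, ← Real.rpow_mul_natCast (le_of_lt hx), one_div_mul_eq_div]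
    simp only [one_div, Real.sqrt_inv, intSum_inv _ (Real.sqrt_pos.2 hx), one_mul, smul_eq_mul,
      Finset.prod_mul_distrib, Finset.prod_const, Finset.card_univ, hsqrt, Complex.ofReal_pow]
  hf_top := isBigO_prod_intSum_sqrt_sub f
  hg_top := isBigO_prod_intSum_sqrt_sub fun i ↦ 𝓕 (f i)

end TensorPoisson

section Gaussian

open Polynomial

theorem abs_pow_mul_exp_neg_mul_sq_le {b : ℝ} (hb : 0 < b) (k : ℕ) (x : ℝ) :
    |x| ^ k * Real.exp (-b * x ^ 2) ≤ 1 + k.factorial / b ^ k := by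
  have hfact : (b * x ^ 2) ^ k ≤ k.factorial * Real.exp (b * x ^ 2) :=
    (div_le_iff₀' (by positivity)).1 (Real.pow_div_factorial_le_exp _ (by positivity) k)
  have hpow : |x| ^ k ≤ 1 + (x ^ 2) ^ k := by
    rw [← sq_abs, pow_right_comm]
    nlinarith [sq_nonneg (|x| ^ k - 1)]
  rw [neg_mul, Real.exp_neg, ← div_eq_mul_inv, div_le_iff₀ (Real.exp_pos _)]
  calc |x| ^ k ≤ 1 + (b * x ^ 2) ^ k / b ^ k := by
        rwa [mul_pow, mul_div_cancel_left₀ _ (by positivity)]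
    _ ≤ Real.exp (b * x ^ 2) + k.factorial * Real.exp (b * x ^ 2) / b ^ k := by
        gcongr
        exact Real.one_le_exp (by positivity)
    _ = (1 + k.factorial / b ^ k) * Real.exp (b * x ^ 2) := by ring

variable {b : ℂ}

theorem exists_abs_pow_mul_norm_eval_mul_gaussian_le (hb : 0 < b.re) (k : ℕ) (p : ℂ[X]) :
    ∃ C, ∀ x : ℝ, |x| ^ k * ‖p.eval (x : ℂ) * Complex.exp (-b * x ^ 2)‖ ≤ C := by
  induction p using Polynomial.induction_on' with
  | add p q hp hq =>
    obtain ⟨C, hC⟩ := hp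
    obtain ⟨D, hD⟩ := hq
    refine ⟨C + D, fun x ↦ ?_⟩
    rw [eval_add, add_mul]
    grw [norm_add_le, mul_add, hC x, hD x]
  | monomial n a =>
    refine ⟨‖a‖ * (1 + (k + n).factorial / b.re ^ (k + n)), fun x ↦ ?_⟩
    rw [eval_monomial, norm_mul, norm_mul, norm_pow, Complex.norm_real, Real.norm_eq_abs,
      norm_cexp_neg_mul_sq]
    grw [← abs_pow_mul_exp_neg_mul_sq_le hb (k + n) x]
    exact le_of_eq (by ring)

theorem exists_iteratedDeriv_eval_mul_gaussian_eq (b : ℂ) (n : ℕ) (p : ℂ[X]) :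
    ∃ q : ℂ[X], iteratedDeriv n (fun x : ℝ ↦ p.eval (x : ℂ) * Complex.exp (-b * x ^ 2)) =
      fun x : ℝ ↦ q.eval (x : ℂ) * Complex.exp (-b * x ^ 2) := by
  induction n generalizing p with
  | zero => exact ⟨p, iteratedDeriv_zero⟩
  | succ n ih =>
    obtain ⟨q, hq⟩ := ih (derivative p - C (2 * b) * X * p)
    refine ⟨q, ?_⟩
    rw [iteratedDeriv_succ', ← hq]
    congr 1
    ext x
    have hderiv := (p.hasDerivAt (x : ℂ)).fun_mul
      (((hasDerivAt_pow 2 (x : ℂ)).const_mul (-b)).cexp)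
    rw [hderiv.comp_ofReal.deriv]
    simp only [eval_sub, eval_mul, eval_C, eval_X, Nat.cast_ofNat]
    ring

/-- The Schwartz function `p(x) exp (-b x²)`. -/
def polynomialMulGaussian (hb : 0 < b.re) (p : ℂ[X]) : 𝓢(ℝ, ℂ) where
  toFun x := p.eval (x : ℂ) * Complex.exp (-b * x ^ 2)
  smooth' := by
    have hofReal : ContDiff ℝ (⊤ : ℕ∞) ((↑) : ℝ → ℂ) := Complex.ofRealCLM.contDiff
    simp only [Polynomial.eval_eq_sum_range]
    fun_prop
  decay' k n := by
    obtain ⟨q, hq⟩ := exists_iteratedDeriv_eval_mul_gaussian_eq b n p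
    simpa only [norm_iteratedFDeriv_eq_norm_iteratedDeriv, hq, Real.norm_eq_abs] using
      exists_abs_pow_mul_norm_eval_mul_gaussian_le hb k q

/-- The Schwartz function `x ^ a exp (-π x²)`. -/
def monomialMulGaussian (a : ℕ) : 𝓢(ℝ, ℂ) :=
  polynomialMulGaussian (b := Real.pi) (by simpa using Real.pi_pos) (X ^ a)

theorem monomialMulGaussian_apply (a : ℕ) (x : ℝ) :
    monomialMulGaussian a x = (x : ℂ) ^ a * Real.exp (-Real.pi * x ^ 2) := by
  change (X ^ a : ℂ[X]).eval (x : ℂ) * Complex.exp (-Real.pi * x ^ 2) = _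
  rw [eval_pow, eval_X]
  push_cast
  rfl

end Gaussian

section Polar

open Metric Measure

theorem integral_volumeIoiPow {F : Type*} [NormedAddCommGroup F] [NormedSpace ℝ F] (n : ℕ)
    (g : ℝ → F) :
    ∫ y : Set.Ioi (0 : ℝ), g y ∂volumeIoiPow n = ∫ y in Set.Ioi (0 : ℝ), y ^ n • g y := by
  rw [volumeIoiPow]
  simp only [ENNReal.ofReal]
  rw [integral_withDensity_eq_integral_smul
    (measurable_subtype_coe.pow_const _).real_toNNReal,
    integral_subtype_comap measurableSet_Ioi fun y : ℝ ↦ Real.toNNReal (y ^ n) • g y]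
  refine setIntegral_congr_fun measurableSet_Ioi fun y hy ↦ ?_
  rw [NNReal.smul_def, Real.coe_toNNReal _ (pow_nonneg (le_of_lt hy) _)]

theorem integrable_volumeIoiPow_iff {F : Type*} [NormedAddCommGroup F] [NormedSpace ℝ F] {n : ℕ}
    {g : ℝ → F} :
    Integrable (fun y : Set.Ioi (0 : ℝ) ↦ g y) (volumeIoiPow n) ↔
      IntegrableOn (fun y ↦ y ^ n • g y) (Set.Ioi 0) := by
  rw [volumeIoiPow, integrable_withDensity_iff_integrable_smul' (by fun_prop) (by simp),
    integrableOn_iff_comap_subtypeVal measurableSet_Ioi]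
  refine integrable_congr (.of_forall fun y ↦ ?_)
  simp only [Function.comp_apply, ENNReal.toReal_ofReal (pow_nonneg (le_of_lt y.2) n)]

variable {E : Type*} [NormedAddCommGroup E] [NormedSpace ℝ E] {f : E → ℂ} {d : ℕ}

theorem mul_norm_eq_homeomorphUnitSphereProd
    (hf : ∀ c : ℝ, 0 < c → ∀ x, f (c • x) = (c : ℂ) ^ d * f x) (φ : ℝ → ℂ) (x : ({0}ᶜ : Set E)) :
    f x * φ ‖(x : E)‖ = f (homeomorphUnitSphereProd E x).1 *
      (((homeomorphUnitSphereProd E x).2 : ℂ) ^ d * φ (homeomorphUnitSphereProd E x).2) := by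
  have hx : ‖(x : E)‖ ≠ 0 := norm_ne_zero_iff.2 x.2
  have hsmul := hf _ (norm_pos_iff.2 x.2) (‖(x : E)‖⁻¹ • (x : E))
  rw [smul_inv_smul₀ hx] at hsmul
  rw [homeomorphUnitSphereProd_apply_snd_coe, homeomorphUnitSphereProd_apply_fst_coe, hsmul]
  ring

variable [Nontrivial E] [FiniteDimensional ℝ E] [MeasurableSpace E] [BorelSpace E] (μ : Measure E)
  [μ.IsAddHaarMeasure]

theorem integral_homogeneous_mul_radial
    (hf : ∀ c : ℝ, 0 < c → ∀ x, f (c • x) = (c : ℂ) ^ d * f x) (φ : ℝ → ℂ) :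
    ∫ x, f x * φ ‖x‖ ∂μ = (∫ w : sphere (0 : E) 1, f w ∂μ.toSphere) *
      ∫ y in Set.Ioi (0 : ℝ), (y : ℂ) ^ (d + (Module.finrank ℝ E - 1)) * φ y := by
  calc ∫ x, f x * φ ‖x‖ ∂μ
      = ∫ x : ({0}ᶜ : Set E), f x * φ ‖(x : E)‖ ∂(μ.comap (↑)) := by
        rw [integral_subtype_comap (measurableSet_singleton _).compl fun x ↦ f x * φ ‖x‖,
          restrict_compl_singleton]
    _ = ∫ p : sphere (0 : E) 1 × Set.Ioi (0 : ℝ), f p.1 * ((p.2 : ℂ) ^ d * φ p.2)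
          ∂μ.toSphere.prod (volumeIoiPow (Module.finrank ℝ E - 1)) := by
        simp only [mul_norm_eq_homeomorphUnitSphereProd hf]
        exact μ.measurePreserving_homeomorphUnitSphereProd.integral_comp
          (Homeomorph.measurableEmbedding _)
          fun p : sphere (0 : E) 1 × Set.Ioi (0 : ℝ) ↦ f p.1 * ((p.2 : ℂ) ^ d * φ p.2)
    _ = (∫ w : sphere (0 : E) 1, f w ∂μ.toSphere) * ∫ y : Set.Ioi (0 : ℝ), (y : ℂ) ^ d * φ y
          ∂volumeIoiPow (Module.finrank ℝ E - 1) :=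
        integral_prod_mul (fun w : sphere (0 : E) 1 ↦ f w)
          fun y : Set.Ioi (0 : ℝ) ↦ (y : ℂ) ^ d * φ y
    _ = _ := by
        rw [integral_volumeIoiPow _ fun y : ℝ ↦ (y : ℂ) ^ d * φ y]
        simp only [Complex.real_smul, Complex.ofReal_pow, ← mul_assoc, ← pow_add, add_comm]

theorem integrable_homogeneous_mul_radial
    (hf : ∀ c : ℝ, 0 < c → ∀ x, f (c • x) = (c : ℂ) ^ d * f x)
    (hfs : Integrable (fun w : sphere (0 : E) 1 ↦ f w) μ.toSphere) {φ : ℝ → ℂ}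
    (hφ : IntegrableOn (fun y : ℝ ↦ (y : ℂ) ^ (d + (Module.finrank ℝ E - 1)) * φ y)
      (Set.Ioi 0)) :
    Integrable (fun x ↦ f x * φ ‖x‖) μ := by
  have hradial : Integrable (fun y : Set.Ioi (0 : ℝ) ↦ (y : ℂ) ^ d * φ y)
      (volumeIoiPow (Module.finrank ℝ E - 1)) := by
    rw [integrable_volumeIoiPow_iff (g := fun y ↦ (y : ℂ) ^ d * φ y)]
    refine hφ.congr_fun (fun y _ ↦ ?_) measurableSet_Ioi
    simp only [Complex.real_smul, Complex.ofReal_pow]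
    ring
  have hprod := (μ.measurePreserving_homeomorphUnitSphereProd.integrable_comp_emb
    (Homeomorph.measurableEmbedding _)).2 (hfs.mul_prod hradial)
  rw [← restrict_compl_singleton (μ := μ) (0 : E), ← IntegrableOn,
    integrableOn_iff_comap_subtypeVal (measurableSet_singleton _).compl]
  exact hprod.congr (.of_forall fun x ↦ (mul_norm_eq_homeomorphUnitSphereProd hf φ x).symm)

theorem integral_Ioi_pow_mul_exp_neg_pi_mul_sq (m : ℕ) :
    ∫ y in Set.Ioi (0 : ℝ), (y : ℂ) ^ m * Real.exp (-Real.pi * y ^ 2) =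
      Complex.Gammaℝ (m + 1) / 2 := by
  have h := integral_rpow_mul_exp_neg_mul_rpow (p := 2) (q := m) (b := Real.pi) two_pos
    (neg_one_lt_zero.trans_le m.cast_nonneg) Real.pi_pos
  simp only [Real.rpow_natCast, Real.rpow_two] at h
  simp only [← Complex.ofReal_pow, ← Complex.ofReal_mul]
  rw [integral_complex_ofReal, h, Complex.Gammaℝ_def]
  push_cast [Complex.ofReal_cpow Real.pi_pos.le, ← Complex.Gamma_ofReal]
  ring

theorem integral_homogeneous_mul_exp_neg_pi_mul_sq
    (hf : ∀ c : ℝ, 0 < c → ∀ x, f (c • x) = (c : ℂ) ^ d * f x) :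
    ∫ x, f x * Real.exp (-Real.pi * ‖x‖ ^ 2) ∂μ =
      (∫ w : sphere (0 : E) 1, f w ∂μ.toSphere) *
        (Complex.Gammaℝ (d + Module.finrank ℝ E) / 2) := by
  rw [integral_homogeneous_mul_radial μ hf fun y ↦ (Real.exp (-Real.pi * y ^ 2) : ℂ),
    integral_Ioi_pow_mul_exp_neg_pi_mul_sq, Nat.cast_add, Nat.cast_pred Module.finrank_pos]
  congr 3
  ring

theorem integrableOn_and_setIntegral_homogeneous_div_norm_cpow
    (hf : ∀ c : ℝ, 0 < c → ∀ x, f (c • x) = (c : ℂ) ^ d * f x)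
    (hfs : Integrable (fun w : sphere (0 : E) 1 ↦ f w) μ.toSphere) {s : ℂ}
    (hs : d + Module.finrank ℝ E < s.re) :
    IntegrableOn (fun x ↦ f x / (‖x‖ : ℂ) ^ s) (closedBall 0 1)ᶜ μ ∧
      ∫ x in (closedBall 0 1)ᶜ, f x / (‖x‖ : ℂ) ^ s ∂μ =
        (∫ w : sphere (0 : E) 1, f w ∂μ.toSphere) / (s - (d + Module.finrank ℝ E)) := by
  let φ : ℝ → ℂ := (Set.Ioi 1).indicator fun y ↦ ((y : ℂ) ^ s)⁻¹
  have hball : MeasurableSet (closedBall (0 : E) 1)ᶜ := measurableSet_closedBall.compl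
  have hindicator : (closedBall (0 : E) 1)ᶜ.indicator (fun x ↦ f x / (‖x‖ : ℂ) ^ s) =
      fun x ↦ f x * φ ‖x‖ := by
    ext x
    by_cases hx : 1 < ‖x‖ <;> simp [φ, hx, div_eq_mul_inv]
  have hradial : (fun y : ℝ ↦ (y : ℂ) ^ (d + (Module.finrank ℝ E - 1)) * φ y) =
      (Set.Ioi 1).indicator fun y : ℝ ↦ (y : ℂ) ^ (d + Module.finrank ℝ E - 1 - s) := by
    ext y
    by_cases hy : y ∈ Set.Ioi 1
    · have hy0 : (y : ℂ) ≠ 0 := by exact_mod_cast (zero_lt_one.trans (Set.mem_Ioi.1 hy)).ne'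
      simp only [φ, Set.indicator_of_mem hy]
      rw [Complex.cpow_sub _ _ hy0, add_sub_assoc, ← Nat.cast_pred Module.finrank_pos,
        ← Nat.cast_add, Complex.cpow_natCast, div_eq_mul_inv]
    · simp [φ, hy]
  have hre : (d + Module.finrank ℝ E - 1 - s : ℂ).re < -1 := by
    simp only [Complex.sub_re, Complex.add_re, Complex.natCast_re, Complex.one_re]
    linarith
  constructor
  · rw [← integrable_indicator_iff hball, hindicator]
    refine integrable_homogeneous_mul_radial μ hf hfs ?_
    rw [hradial]
    exact ((integrableOn_Ioi_cpow_of_lt hre one_pos).integrable_indicator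
      measurableSet_Ioi).integrableOn
  · rw [← integral_indicator hball, hindicator, integral_homogeneous_mul_radial μ hf, hradial,
      setIntegral_indicator measurableSet_Ioi, Set.Ioi_inter_Ioi, max_eq_right zero_le_one,
      integral_Ioi_cpow_of_lt hre one_pos, Complex.ofReal_one, Complex.one_cpow, neg_div,
      ← div_neg, mul_one_div]
    congr 1
    ring

end Polar

section LatticeNorm

variable {n : ℕ} (k : Fin n → ℤ)

theorem znorm_eq_norm : znorm k = ‖WithLp.toLp 2 fun i ↦ (k i : ℝ)‖ := by
  simp [znorm, EuclideanSpace.norm_eq]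

theorem znorm_nonneg : 0 ≤ znorm k := Real.sqrt_nonneg _

theorem znorm_eq_zero {k : Fin n → ℤ} : znorm k = 0 ↔ k = 0 := by
  simp [znorm_eq_norm, funext_iff]

theorem abs_le_znorm (i : Fin n) : |(k i : ℝ)| ≤ znorm k := by
  simpa [znorm_eq_norm] using PiLp.norm_apply_le (WithLp.toLp 2 fun i ↦ (k i : ℝ)) i

theorem summable_znorm_rpow {r : ℝ} (hr : r < -n) :
    Summable fun k : Fin n → ℤ ↦ znorm k ^ r := by
  let b := (EuclideanSpace.basisFun (Fin n) ℝ).toBasis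
  let L := Submodule.span ℤ (Set.range b)
  have hrank : Module.finrank ℤ L = n := by rw [ZLattice.rank ℝ L, finrank_euclideanSpace_fin]
  let φ (k : Fin n → ℤ) : L := ∑ i, k i • ⟨b i, Submodule.subset_span ⟨i, rfl⟩⟩
  have hφ (k : Fin n → ℤ) : (φ k : EuclideanSpace ℝ (Fin n)) = WithLp.toLp 2 fun i ↦ (k i : ℝ) := by
    ext i
    simp [φ, b, Finset.sum_apply, Pi.single_apply]
  have hφ_inj : Function.Injective φ := fun k l hkl ↦ by
    have h := congrArg (fun v : L ↦ (v : EuclideanSpace ℝ (Fin n))) hkl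
    simpa [hφ, funext_iff] using h
  refine ((ZLattice.summable_norm_rpow L r (by rwa [hrank])).comp_injective hφ_inj).congr fun k ↦ ?_
  rw [Function.comp_apply, Submodule.coe_norm, hφ, znorm_eq_norm]

end LatticeNorm

section Monomial

open MvPolynomial

theorem eval_monomial_one_eq_prod {ι R : Type*} [Fintype ι] [CommSemiring R] (m : ι →₀ ℕ)
    (v : ι → R) : eval v (monomial m 1) = ∏ i, v i ^ m i := by
  simp [eval_monomial, Finsupp.prod_fintype]

theorem eval_monomial_one_mul_left {ι R : Type*} [CommSemiring R] (m : ι →₀ ℕ) (c : R)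
    (v : ι → R) :
    eval (fun i ↦ c * v i) (monomial m 1) = c ^ m.degree * eval v (monomial m 1) := by
  simp only [eval_monomial, one_mul, Finsupp.prod, mul_pow, Finset.prod_mul_distrib,
    Finset.prod_pow_eq_pow_sum, Finsupp.degree_apply]

variable {n : ℕ} (m : Fin n →₀ ℕ)

theorem norm_eval_monomial_one_le (k : Fin n → ℤ) :
    ‖eval (fun i ↦ (k i : ℂ)) (monomial m 1)‖ ≤ znorm k ^ m.degree := by
  rw [eval_monomial_one_eq_prod, norm_prod, Finsupp.degree_eq_sum, ← Finset.prod_pow_eq_pow_sum]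
  gcongr with i
  rw [norm_pow, Complex.norm_intCast]
  gcongr
  exact abs_le_znorm k i

theorem summable_norm_eval_monomial_one_div {σ : ℝ} (hσ : m.degree + n < σ) :
    Summable fun k : Fin n → ℤ ↦
      ‖eval (fun i ↦ (k i : ℂ)) (monomial m 1)‖ / |znorm k| ^ σ := by
  have hσ0 : 0 < σ := lt_of_le_of_lt (by positivity) hσ
  refine .of_nonneg_of_le (fun k ↦ by positivity) (fun k ↦ ?_)
    (summable_znorm_rpow (n := n) (r := m.degree - σ) (by linarith))
  rw [abs_of_nonneg (znorm_nonneg k)]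
  rcases (znorm_nonneg k).eq_or_lt with hk | hk
  · rw [← hk, Real.zero_rpow hσ0.ne', div_zero]
    positivity
  · rw [Real.rpow_sub hk, Real.rpow_natCast]
    gcongr
    exact norm_eval_monomial_one_le m k

theorem prod_monomialMulGaussian (x : EuclideanSpace ℝ (Fin n)) :
    ∏ i, monomialMulGaussian (m i) (x i) =
      eval (fun i ↦ (x i : ℂ)) (monomial m 1) * Real.exp (-Real.pi * ‖x‖ ^ 2) := by
  simp only [monomialMulGaussian_apply, Finset.prod_mul_distrib, eval_monomial_one_eq_prod,
    ← Complex.ofReal_prod, ← Real.exp_sum, ← Finset.mul_sum, EuclideanSpace.real_norm_sq_eq]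

theorem prod_fourier_zero (f : Fin n → 𝓢(ℝ, ℂ)) :
    ∏ i, 𝓕 (f i) 0 = ∫ x : EuclideanSpace ℝ (Fin n), ∏ i, f i (x i) := by
  have hfourier (i : Fin n) : 𝓕 (f i) 0 = ∫ x, f i x := by
    simp [SchwartzMap.fourier_coe, Real.fourier_eq']
  simp only [hfourier]
  rw [← integral_fintype_prod_volume_eq_prod,
    ← (PiLp.volume_preserving_ofLp (Fin n)).integral_comp
      (MeasurableEquiv.toLp 2 (Fin n → ℝ)).symm.measurableEmbedding]

/-- The integral of the monomial `x ^ m` over the unit sphere. -/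
def sphereMoment : ℂ :=
  ∫ w : Metric.sphere (0 : EuclideanSpace ℝ (Fin n)) 1,
    eval (fun i ↦ ((w : EuclideanSpace ℝ (Fin n)) i : ℂ)) (monomial m 1) ∂Measure.toSphere volume

theorem eval_monomial_one_smul (c : ℝ) (x : EuclideanSpace ℝ (Fin n)) :
    eval (fun i ↦ ((c • x) i : ℂ)) (monomial m 1) =
      (c : ℂ) ^ m.degree * eval (fun i ↦ (x i : ℂ)) (monomial m 1) := by
  simp [← eval_monomial_one_mul_left]

theorem integrable_eval_toSphere (P : MvPolynomial (Fin n) ℂ) :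
    Integrable (fun w : Metric.sphere (0 : EuclideanSpace ℝ (Fin n)) 1 ↦
      eval (fun i ↦ ((w : EuclideanSpace ℝ (Fin n)) i : ℂ)) P) (Measure.toSphere volume) := by
  have hcont : Continuous fun w : Metric.sphere (0 : EuclideanSpace ℝ (Fin n)) 1 ↦
      eval (fun i ↦ ((w : EuclideanSpace ℝ (Fin n)) i : ℂ)) P :=
    (MvPolynomial.continuous_eval P).comp (by fun_prop)
  exact hcont.integrable_of_hasCompactSupport (HasCompactSupport.of_compactSpace _)

variable [NeZero n]

/-- The weak FE-pair of the theta series `∑ k, k ^ m exp (-π |k|² t)`, normalised by the factor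
`t ^ (|m| / 2)`. -/
def monomialPair : WeakFEPair ℂ := tensorPoissonPair fun i ↦ monomialMulGaussian (m i)

theorem monomialPair_f₀ : (monomialPair m).f₀ = 0 ^ m.degree := by
  change ∏ i, monomialMulGaussian (m i) 0 = _
  simp [monomialMulGaussian_apply, Finset.prod_pow_eq_pow_sum, Finsupp.degree_eq_sum]

theorem monomialPair_g₀ :
    (monomialPair m).g₀ = sphereMoment m * (Complex.Gammaℝ (m.degree + n) / 2) := by
  have h := integral_homogeneous_mul_exp_neg_pi_mul_sq volume (d := m.degree)
    (f := fun x : EuclideanSpace ℝ (Fin n) ↦ eval (fun i ↦ (x i : ℂ)) (monomial m 1))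
    fun c _ ↦ eval_monomial_one_smul m c
  rw [finrank_euclideanSpace_fin] at h
  rw [sphereMoment, ← h]
  simp only [← prod_monomialMulGaussian]
  exact prod_fourier_zero _

theorem hasSum_monomial_mul_exp {t : ℝ} (ht : 0 < t) :
    HasSum (fun k : Fin n → ℤ ↦ if znorm k = 0 then 0 else
        eval (fun i ↦ (k i : ℂ)) (monomial m 1) * Real.exp (-Real.pi * znorm k ^ 2 * t))
      ((t : ℂ) ^ (-(m.degree / 2) : ℂ) • ((monomialPair m).f t - (monomialPair m).f₀)) := by
  have hterm (k : Fin n → ℤ) : ∏ i, monomialMulGaussian (m i) (√t * k i) =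
      (t : ℂ) ^ (m.degree / 2 : ℂ) *
        (eval (fun i ↦ (k i : ℂ)) (monomial m 1) * Real.exp (-Real.pi * znorm k ^ 2 * t)) := by
    have h := prod_monomialMulGaussian m (√t • WithLp.toLp 2 fun i ↦ (k i : ℝ))
    have hexp : -Real.pi * (√t * znorm k) ^ 2 = -Real.pi * znorm k ^ 2 * t := by
      rw [mul_pow, Real.sq_sqrt ht.le]
      ring
    have hsqrt : (√t : ℂ) ^ m.degree = (t : ℂ) ^ (m.degree / 2 : ℂ) := by
      rw [Real.sqrt_eq_rpow, Complex.ofReal_cpow ht.le, ← Complex.cpow_mul_nat]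
      congr 1
      push_cast
      ring
    rw [norm_smul, Real.norm_of_nonneg (Real.sqrt_nonneg t), ← znorm_eq_norm, hexp,
      eval_monomial_one_smul, hsqrt, mul_assoc] at h
    simpa using h
  have hsum := (summable_norm_and_hasSum_pi_prod fun i ↦
    summable_norm_schwartz_mul_int (monomialMulGaussian (m i)) (Real.sqrt_pos.2 ht)).2
  have hsub := (hsum.sub (hasSum_ite_eq 0 (∏ i, monomialMulGaussian (m i) 0))).const_smul
    ((t : ℂ) ^ (-(m.degree / 2) : ℂ))
  refine hsub.congr_fun fun k ↦ ?_
  simp only [znorm_eq_zero]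
  split_ifs with hk
  · simp [hk]
  · have ht0 : (t : ℂ) ≠ 0 := by exact_mod_cast ht.ne'
    rw [sub_zero, hterm, smul_eq_mul, ← mul_assoc, ← Complex.cpow_add _ _ ht0, neg_add_cancel,
      Complex.cpow_zero, one_mul]

theorem hasSum_zetaPTerm_monomial {s : ℂ} (hs : m.degree + n < s.re) :
    HasSum (zetaPTerm (monomial m 1) s)
      ((monomialPair m).Λ ((s - m.degree) / 2) / Complex.Gammaℝ s) := by
  have hs0 : 0 < s.re := lt_of_le_of_lt (by positivity) hs
  have hk : (monomialPair m).k < ((s - m.degree) / 2).re := by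
    change (Fintype.card (Fin n) / 2 : ℝ) < _
    rw [Fintype.card_fin, Complex.div_ofNat_re, Complex.sub_re, Complex.natCast_re]
    linarith
  have hmellin : mellin (fun t : ℝ ↦ (t : ℂ) ^ (-(m.degree / 2) : ℂ) •
      ((monomialPair m).f t - (monomialPair m).f₀)) (s / 2) =
      (monomialPair m).Λ ((s - m.degree) / 2) := by
    rw [mellin_cpow_smul, ← ((monomialPair m).hasMellin hk).2]
    congr 1
    ring
  have h := (hasSum_mellin_pi_mul_sq hs0 (fun t ht ↦ hasSum_monomial_mul_exp m ht)
    (summable_norm_eval_monomial_one_div m hs)).div_const (Complex.Gammaℝ s)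
  rw [hmellin] at h
  refine h.congr_fun fun k ↦ ?_
  have hΓ := Complex.Gammaℝ_ne_zero_of_re_pos hs0
  rw [zetaPTerm]
  split_ifs with hk
  · have hs0' : s ≠ 0 := fun h ↦ by simp [h] at hs0
    simp [znorm_eq_zero.2 hk, hs0']
  · rw [abs_of_nonneg (znorm_nonneg k)]
    field_simp

theorem integrableOn_and_setIntegral_monomial {s : ℂ} (hs : m.degree + n < s.re) :
    IntegrableOn (fun x : EuclideanSpace ℝ (Fin n) ↦
        eval (fun i ↦ (x i : ℂ)) (monomial m 1) / (‖x‖ : ℂ) ^ s) (Metric.closedBall 0 1)ᶜ ∧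
      ∫ x : EuclideanSpace ℝ (Fin n) in (Metric.closedBall 0 1)ᶜ,
        eval (fun i ↦ (x i : ℂ)) (monomial m 1) / (‖x‖ : ℂ) ^ s =
          sphereMoment m / (s - (m.degree + n)) := by
  have h := integrableOn_and_setIntegral_homogeneous_div_norm_cpow volume (d := m.degree) (s := s)
    (f := fun x : EuclideanSpace ℝ (Fin n) ↦ eval (fun i ↦ (x i : ℂ)) (monomial m 1))
    (fun c _ ↦ eval_monomial_one_smul m c) (integrable_eval_toSphere _)
  rw [finrank_euclideanSpace_fin] at h
  exact h hs

theorem monomialPair_Λ_div_Gammaℝ {s : ℂ} (hs : m.degree + n < s.re) :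
    (monomialPair m).Λ ((s - m.degree) / 2) / Complex.Gammaℝ s =
      (monomialPair m).Λ₀ ((s - m.degree) / 2) / Complex.Gammaℝ s -
        0 ^ m.degree / (Real.pi * Complex.Gammaℝ (s + 2)) -
        sphereMoment m * Complex.Gammaℝ (m.degree + n) /
          ((m.degree + n - s) * Complex.Gammaℝ s) := by
  have hs0 : 0 < s.re := lt_of_le_of_lt (by positivity) hs
  have hs0' : s ≠ 0 := fun h ↦ by simp [h] at hs0
  have hΓ := Complex.Gammaℝ_ne_zero_of_re_pos hs0
  have hπ : (Real.pi : ℂ) ≠ 0 := by exact_mod_cast Real.pi_ne_zero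
  have hpole : (m.degree + n - s : ℂ) ≠ 0 := fun h ↦ by
    have hre : (m.degree + n - s.re : ℝ) = 0 := by simpa using congrArg Complex.re h
    linarith
  -- The pole of `Λ` at `s = |m|` has residue `0` unless `|m| = 0`.
  have hzero : 1 / ((s - m.degree) / 2) * 0 ^ m.degree = (2 / s * 0 ^ m.degree : ℂ) := by
    obtain hd | hd := eq_or_ne m.degree 0 <;> simp [hd]
  have hk : ((monomialPair m).k : ℂ) = n / 2 := by
    simp [monomialPair, tensorPoissonPair]
  have hε : (monomialPair m).ε = 1 := rfl
  have hk_sub : (n / 2 - (s - m.degree) / 2 : ℂ) = (m.degree + n - s) / 2 := by ring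
  rw [WeakFEPair.Λ, monomialPair_f₀, monomialPair_g₀, smul_eq_mul, smul_eq_mul, hzero, hk, hε,
    hk_sub, Complex.Gammaℝ_add_two hs0']
  field_simp

/-- The entire continuation of the sum over `ℤⁿ` minus the exterior integral of `x ^ m / |x| ^ s`:
the regular part of the Mellin transform of the theta series, the term left by its pole at `0`, and
the difference quotient left by the two poles at `|m| + n`. -/
def monomialDelta (s : ℂ) : ℂ :=
  (monomialPair m).Λ₀ ((s - m.degree) / 2) * (Complex.Gammaℝ s)⁻¹ -
    0 ^ m.degree / Real.pi * (Complex.Gammaℝ (s + 2))⁻¹ +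
    sphereMoment m * Complex.Gammaℝ (m.degree + n) *
      dslope (fun z ↦ (Complex.Gammaℝ z)⁻¹) (m.degree + n) s

theorem differentiable_monomialDelta : Differentiable ℂ (monomialDelta m) := by
  have hΓ := Complex.differentiable_Gammaℝ_inv
  have hΛ₀ : Differentiable ℂ fun s : ℂ ↦ (monomialPair m).Λ₀ ((s - m.degree) / 2) :=
    (monomialPair m).differentiable_Λ₀.comp (by fun_prop)
  have hΓ_add : Differentiable ℂ fun s : ℂ ↦ (Complex.Gammaℝ (s + 2))⁻¹ :=
    hΓ.comp (differentiable_id.add_const 2)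
  have hslope : Differentiable ℂ
      (dslope (fun z ↦ (Complex.Gammaℝ z)⁻¹) (m.degree + n : ℂ)) :=
    differentiableOn_univ.1 <|
      (Complex.differentiableOn_dslope univ_mem).2 hΓ.differentiableOn
  exact ((hΛ₀.mul hΓ).sub (hΓ_add.const_mul _)).add (hslope.const_mul _)

theorem monomialDelta_eq {s : ℂ} (hs : m.degree + n < s.re) :
    monomialDelta m s = (monomialPair m).Λ ((s - m.degree) / 2) / Complex.Gammaℝ s -
      sphereMoment m / (s - (m.degree + n)) := by
  have hΓ := Complex.Gammaℝ_ne_zero_of_re_pos (lt_of_le_of_lt (by positivity) hs : 0 < s.re)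
  have hΓ_add : Complex.Gammaℝ (m.degree + n) ≠ 0 :=
    Complex.Gammaℝ_ne_zero_of_re_pos (by exact_mod_cast Nat.add_pos_right _ (Nat.pos_of_neZero n))
  have hpole : s ≠ m.degree + n := fun h ↦ by simp [h] at hs
  have hsub := sub_ne_zero.2 hpole
  rw [monomialPair_Λ_div_Gammaℝ m hs, monomialDelta, dslope_of_ne _ hpole, slope_def_field,
    ← neg_sub s (m.degree + n : ℂ)]
  field_simp
  ring

end Monomial

section HasDelta

open MvPolynomial

variable {n : ℕ}

/-- `w` is the difference at `s` of the sum over `ℤⁿ` and the exterior integral of `P(x) / |x| ^ s`,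
both being absolutely convergent. -/
structure HasDelta (P : MvPolynomial (Fin n) ℂ) (s w : ℂ) : Prop where
  summable : Summable (zetaPTerm P s)
  integrableOn : IntegrableOn
    (fun x : EuclideanSpace ℝ (Fin n) ↦ eval (fun i ↦ (x i : ℂ)) P / (‖x‖ : ℂ) ^ s)
    (Metric.closedBall 0 1)ᶜ
  eq_tsum_sub_integral : w = ∑' k, zetaPTerm P s k -
    ∫ x : EuclideanSpace ℝ (Fin n) in (Metric.closedBall 0 1)ᶜ,
      eval (fun i ↦ (x i : ℂ)) P / (‖x‖ : ℂ) ^ s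

theorem hasDelta_of_dim_zero (P : MvPolynomial (Fin 0) ℂ) (s : ℂ) : HasDelta P s 0 := by
  have hterm : zetaPTerm P s = 0 := funext fun k ↦ if_pos (Subsingleton.elim k 0)
  have hball : (Metric.closedBall (0 : EuclideanSpace ℝ (Fin 0)) 1)ᶜ = ∅ := by
    ext x
    simp [Subsingleton.elim x 0]
  refine ⟨hterm ▸ summable_zero, ?_, ?_⟩
  · rw [hball]
    exact integrableOn_empty
  · simp [hterm, hball]

theorem HasDelta.sum_C_mul {ι : Type*} {t : Finset ι} {c : ι → ℂ}
    {Q : ι → MvPolynomial (Fin n) ℂ} {s : ℂ} {w : ι → ℂ} (h : ∀ i ∈ t, HasDelta (Q i) s (w i)) :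
    HasDelta (∑ i ∈ t, C (c i) * Q i) s (∑ i ∈ t, c i * w i) := by
  have hterm : zetaPTerm (∑ i ∈ t, C (c i) * Q i) s =
      fun k ↦ ∑ i ∈ t, c i * zetaPTerm (Q i) s k := by
    ext k
    by_cases hk : k = 0 <;> simp [zetaPTerm, hk, Finset.sum_div, mul_div_assoc]
  have hfun : (fun x : EuclideanSpace ℝ (Fin n) ↦
      eval (fun i ↦ (x i : ℂ)) (∑ i ∈ t, C (c i) * Q i) / (‖x‖ : ℂ) ^ s) =
      fun x ↦ ∑ i ∈ t, c i * (eval (fun i ↦ (x i : ℂ)) (Q i) / (‖x‖ : ℂ) ^ s) := by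
    ext x
    simp [Finset.sum_div, mul_div_assoc]
  have hsummable : ∀ i ∈ t, Summable fun k ↦ c i * zetaPTerm (Q i) s k :=
    fun i hi ↦ (h i hi).summable.mul_left _
  have hintegrable (i) (hi : i ∈ t) := (h i hi).integrableOn.const_mul (c i)
  refine ⟨hterm ▸ summable_sum hsummable, hfun ▸ integrable_finsetSum _ hintegrable, ?_⟩
  rw [hterm, hfun, Summable.tsum_finsetSum hsummable, integral_finsetSum _ hintegrable,
    ← Finset.sum_sub_distrib]
  refine Finset.sum_congr rfl fun i hi ↦ ?_
  rw [(h i hi).eq_tsum_sub_integral, mul_sub, tsum_mul_left, integral_const_mul]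

theorem hasDelta_monomial [NeZero n] {m : Fin n →₀ ℕ} {s : ℂ} (hs : m.degree + n < s.re) :
    HasDelta (monomial m 1) s (monomialDelta m s) := by
  obtain ⟨hintegrable, hintegral⟩ := integrableOn_and_setIntegral_monomial m hs
  have hsum := hasSum_zetaPTerm_monomial m hs
  exact ⟨hsum.summable, hintegrable, by rw [monomialDelta_eq m hs, hsum.tsum_eq, hintegral]⟩

end HasDelta

/-- **Lemma.** For a polynomial `P ∈ ℂ[X₁,…,Xₙ]` of degree `d`, the difference
`Δ_P(s) = Σ'_{k∈ℤⁿ} P(k)/|k|^s − ∫_{ℝⁿ∖Bⁿ} P(x)/|x|^s dx` (defined for `Re s > d + n`)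
extends to an entire function on `ℂ`. -/
theorem deltaP_entire (n : ℕ) (P : MvPolynomial (Fin n) ℂ) :
    ∃ g : ℂ → ℂ, Differentiable ℂ g ∧
      ∀ s : ℂ, (P.totalDegree : ℝ) + (n : ℝ) < s.re →
        Summable (zetaPTerm P s) ∧
        IntegrableOn
          (fun x : EuclideanSpace ℝ (Fin n) =>
            MvPolynomial.eval (fun i => ((x i : ℝ) : ℂ)) P / ((‖x‖ : ℂ) ^ s))
          (Metric.closedBall (0 : EuclideanSpace ℝ (Fin n)) 1)ᶜ ∧
        g s = (∑' k : Fin n → ℤ, zetaPTerm P s k) -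
          ∫ x in (Metric.closedBall (0 : EuclideanSpace ℝ (Fin n)) 1)ᶜ,
            MvPolynomial.eval (fun i => ((x i : ℝ) : ℂ)) P / ((‖x‖ : ℂ) ^ s) := by
  obtain rfl | hn := eq_or_ne n 0
  · refine ⟨0, differentiable_const 0, fun s _ ↦ ?_⟩
    obtain ⟨hsum, hint, heq⟩ := hasDelta_of_dim_zero P s
    exact ⟨hsum, hint, heq⟩
  have : NeZero n := ⟨hn⟩
  refine ⟨fun s ↦ ∑ m ∈ P.support, P.coeff m * monomialDelta m s,
    .fun_sum fun m _ ↦ (differentiable_monomialDelta m).const_mul _, fun s hs ↦ ?_⟩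
  have hP : P = ∑ m ∈ P.support, MvPolynomial.C (P.coeff m) * MvPolynomial.monomial m 1 := by
    simp [MvPolynomial.C_mul_monomial]
  have hdegree (m) (hm : m ∈ P.support) : m.degree + n < s.re := by
    refine lt_of_le_of_lt ?_ hs
    gcongr
    exact MvPolynomial.le_totalDegree hm
  have hdelta := HasDelta.sum_C_mul (c := P.coeff) fun m hm ↦ hasDelta_monomial (hdegree m hm)
  rw [← hP] at hdelta
  exact ⟨hdelta.summable, hdelta.integrableOn, hdelta.eq_tsum_sub_integral⟩

end
end

section
/- Let n, p ∈ ℕ. There exists a polynomial P ∈ ℝ[X₁,…,X_p] of degree 4p with positive coefficients (one may take P(X₁,…,X_p) = 5^p (1 + 4(Σ_{j=1}^p X_j)^4)^p) such that for every k ∈ ℤⁿ and every l = (l₁,…,l_p) ∈ (ℤⁿ)^p satisfying k ≠ 0 and k ≠ −l̂_i for all 1 ≤ i ≤ p, one has 1/(|k+l̂₁|² ⋯ |k+l̂_p|²) ≤ P(|l₁|,…,|l_p|) / |k|^{2p}. -/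
noncomputable section

/-- Partial sums `l̂ᵢ = l₁ + ⋯ + lᵢ` of a tuple `l ∈ (ℤⁿ)^p`. -/
def lhat {p n : ℕ} (l : Fin p → Fin n → ℤ) (i : Fin p) : Fin n → ℤ :=
  ∑ j ∈ Finset.Iic i, l j

/-!
If `|y| ≥ 1` and `|x - y| ≤ s`, then `|x| ≤ |y| + s ≤ (1 + s) |y|`, and
`(1 + s)² ≤ 3 + s⁴ ≤ 5 (1 + 4 s⁴)`. Nonzero integer vectors have norm at least one and
`|l̂ᵢ| ≤ |l₁| + ⋯ + |l_p|`, so this applies to `x = k`, `y = k + l̂ᵢ` and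
`s = |l₁| + ⋯ + |l_p|`; the product over `i` is the claim.
-/

open MvPolynomial
open scoped NNReal

universe u

section NormEstimates

lemma one_add_sq_le_five_mul (s : ℝ) : (1 + s) ^ 2 ≤ 5 * (1 + 4 * s ^ 4) := by
  nlinarith [sq_nonneg (s - 1), sq_nonneg (s ^ 2 - 1), sq_nonneg (s ^ 2)]

variable {ι E : Type*} [SeminormedAddCommGroup E] {x : E} {s : ℝ}

lemma norm_sq_le_of_norm_sub_le {y : E} (hy : 1 ≤ ‖y‖) (hxy : ‖x - y‖ ≤ s) :
    ‖x‖ ^ 2 ≤ 5 * (1 + 4 * s ^ 4) * ‖y‖ ^ 2 := by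
  have hs : 0 ≤ s := (norm_nonneg _).trans hxy
  calc
    ‖x‖ ^ 2 ≤ (‖y‖ + s) ^ 2 := by
      gcongr
      exact (norm_le_norm_add_norm_sub' x y).trans (by gcongr)
    _ ≤ (‖y‖ + s * ‖y‖) ^ 2 := by
      gcongr
      exact le_mul_of_one_le_right hs hy
    _ = (1 + s) ^ 2 * ‖y‖ ^ 2 := by ring
    _ ≤ 5 * (1 + 4 * s ^ 4) * ‖y‖ ^ 2 := by
      gcongr
      exact one_add_sq_le_five_mul s

lemma inv_prod_norm_sq_le [Fintype ι] {y : ι → E} (hx : 0 < ‖x‖) (hy : ∀ i, 1 ≤ ‖y i‖)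
    (hxy : ∀ i, ‖x - y i‖ ≤ s) :
    (∏ i, ‖y i‖ ^ 2)⁻¹ ≤
      (5 * (1 + 4 * s ^ 4)) ^ Fintype.card ι / ‖x‖ ^ (2 * Fintype.card ι) := by
  have hprod : ∏ _i : ι, ‖x‖ ^ 2 ≤ ∏ i, 5 * (1 + 4 * s ^ 4) * ‖y i‖ ^ 2 :=
    Finset.prod_le_prod (fun _ _ ↦ by positivity)
      fun i _ ↦ norm_sq_le_of_norm_sub_le (hy i) (hxy i)
  have hpos : 0 < ∏ i, ‖y i‖ ^ 2 :=
    Finset.prod_pos fun i _ ↦ pow_pos (one_pos.trans_le (hy i)) 2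
  rw [le_div_iff₀ (by positivity), inv_mul_le_iff₀ hpos, mul_comm (∏ i, _)]
  simpa [Finset.prod_mul_distrib, pow_mul] using hprod

end NormEstimates

section Polynomials

variable {σ R : Type*}

lemma totalDegree_pow_of_ne_zero [CommSemiring R] [NoZeroDivisors R] {P : MvPolynomial σ R}
    (hP : P ≠ 0) (r : ℕ) : (P ^ r).totalDegree = r * P.totalDegree := by
  induction r with
  | zero => simp
  | succ r ih => rw [pow_succ, totalDegree_mul_of_isDomain (pow_ne_zero r hP) hP, ih, Nat.succ_mul]

lemma coeff_map_toRealHom_pos {Q : MvPolynomial σ ℝ≥0} {m : σ →₀ ℕ}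
    (hm : m ∈ (map NNReal.toRealHom Q).support) : 0 < coeff m (map NNReal.toRealHom Q) := by
  refine lt_of_le_of_ne ?_ (mem_support_iff.mp hm).symm
  rw [coeff_map]
  exact NNReal.coe_nonneg _

variable [Fintype σ]

lemma sum_X_ne_zero [CommSemiring R] [Nontrivial R] [Nonempty σ] :
    (∑ j : σ, X j : MvPolynomial σ R) ≠ 0 := by
  classical
  intro h
  obtain ⟨i⟩ := ‹Nonempty σ›
  simpa using congrArg (eval (Pi.single i (1 : R))) h

variable (σ R) in
/-- The polynomial `5 (1 + 4 (∑ Xⱼ)⁴)`, whose value at `|l₁|, …, |l_p|` bounds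
`|k|² / |k + l̂ᵢ|²`. The coefficients range over any semiring `R`, so that over `ℝ` it is the image
of a polynomial over `ℝ≥0` and hence has nonnegative coefficients. -/
def shiftFactor [CommSemiring R] : MvPolynomial σ R :=
  C 5 * (1 + C 4 * (∑ j, X j) ^ 4)

lemma eval_shiftFactor [CommSemiring R] (f : σ → R) :
    eval f (shiftFactor σ R) = 5 * (1 + 4 * (∑ j, f j) ^ 4) := by
  simp [shiftFactor]

lemma map_shiftFactor {S : Type*} [CommSemiring R] [CommSemiring S] (f : R →+* S) :
    map f (shiftFactor σ R) = shiftFactor σ S := by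
  simp [shiftFactor, map_ofNat f]

lemma totalDegree_shiftFactor [CommSemiring R] [NoZeroDivisors R] [CharZero R]
    [Nonempty σ] : (shiftFactor σ R).totalDegree = 4 := by
  have hhom : (C 4 * (∑ j : σ, X j) ^ 4 : MvPolynomial σ R).IsHomogeneous 4 :=
    ((IsHomogeneous.sum _ _ _ fun j _ ↦ isHomogeneous_X R j).pow 4).C_mul 4
  have hquartic : (C 4 * (∑ j : σ, X j) ^ 4 : MvPolynomial σ R).totalDegree = 4 :=
    hhom.totalDegree (mul_ne_zero (by simp) (pow_ne_zero 4 sum_X_ne_zero))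
  have hsum : (1 + C 4 * (∑ j : σ, X j) ^ 4 : MvPolynomial σ R).totalDegree = 4 := by
    rw [totalDegree_add_eq_right_of_totalDegree_lt (by simp [hquartic]), hquartic]
  have hne : (1 + C 4 * (∑ j : σ, X j) ^ 4 : MvPolynomial σ R) ≠ 0 := by
    intro h
    simp [h] at hsum
  rw [shiftFactor, totalDegree_mul_of_isDomain (by simp) hne, totalDegree_C, hsum]

lemma totalDegree_shiftFactor_pow [CommSemiring R] [NoZeroDivisors R] [CharZero R]
    [Nonempty σ] (r : ℕ) :
    (shiftFactor σ R ^ r).totalDegree = 4 * r := by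
  have hne : shiftFactor σ R ≠ 0 := by
    intro h
    simpa [h] using totalDegree_shiftFactor (σ := σ) (R := R)
  rw [totalDegree_pow_of_ne_zero hne, totalDegree_shiftFactor, mul_comm]

lemma coeff_shiftFactor_pow_pos {r : ℕ} {m : σ →₀ ℕ} (hm : m ∈ (shiftFactor σ ℝ ^ r).support) :
    0 < coeff m (shiftFactor σ ℝ ^ r) := by
  have hmap : map NNReal.toRealHom (shiftFactor σ ℝ≥0 ^ r) = shiftFactor σ ℝ ^ r := by
    rw [map_pow, map_shiftFactor]
  rw [← hmap] at hm ⊢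
  exact coeff_map_toRealHom_pos hm

end Polynomials

section IntegerVectors

/-- The inclusion `ℤⁿ → ℝⁿ` into Euclidean space, along which `znorm` is the restriction of the
norm. -/
def intToEuclidean (n : ℕ) : (Fin n → ℤ) →+ EuclideanSpace ℝ (Fin n) where
  toFun k := WithLp.toLp 2 fun i ↦ (k i : ℝ)
  map_zero' := by ext; simp
  map_add' k l := by ext; simp

variable {n : ℕ}

lemma norm_intToEuclidean (k : Fin n → ℤ) : ‖intToEuclidean n k‖ = znorm k := by
  simp [intToEuclidean, znorm, EuclideanSpace.norm_eq]

lemma one_le_znorm {k : Fin n → ℤ} (hk : k ≠ 0) : 1 ≤ znorm k := by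
  obtain ⟨i, hi⟩ := Function.ne_iff.mp hk
  calc
    (1 : ℝ) ≤ ‖(k i : ℝ)‖ := by
      rw [Real.norm_eq_abs]
      exact_mod_cast Int.one_le_abs hi
    _ ≤ ‖intToEuclidean n k‖ := PiLp.norm_apply_le (intToEuclidean n k) i
    _ = znorm k := norm_intToEuclidean k

lemma norm_intToEuclidean_add_sum {p : ℕ} (k : Fin n → ℤ) (l : Fin p → Fin n → ℤ) (i : Fin p) :
    ‖intToEuclidean n k + ∑ j ∈ Finset.Iic i, intToEuclidean n (l j)‖ = znorm (k + lhat l i) := by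
  rw [← map_sum, ← map_add, norm_intToEuclidean, lhat]

end IntegerVectors

theorem inv_prod_norm_bound_general (σ ι : Type*) [Finite σ] [Nonempty σ] [Fintype ι] :
    ∃ P : MvPolynomial σ ℝ,
      P.totalDegree = 4 * Fintype.card ι ∧
      (∀ m ∈ P.support, 0 < P.coeff m) ∧
      ∀ {E : Type u} [SeminormedAddCommGroup E] (k : E) (l : σ → E) (s : ι → Finset σ),
        0 < ‖k‖ → (∀ i, 1 ≤ ‖k + ∑ j ∈ s i, l j‖) →
        (∏ i, ‖k + ∑ j ∈ s i, l j‖ ^ 2)⁻¹ ≤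
          eval (fun j ↦ ‖l j‖) P / ‖k‖ ^ (2 * Fintype.card ι) := by
  cases nonempty_fintype σ
  refine ⟨shiftFactor σ ℝ ^ Fintype.card ι, totalDegree_shiftFactor_pow _,
    fun m hm ↦ coeff_shiftFactor_pow_pos hm, fun k l s hk hkl ↦ ?_⟩
  have hshift (i : ι) : ‖k - (k + ∑ j ∈ s i, l j)‖ ≤ ∑ j, ‖l j‖ := by
    rw [sub_add_cancel_left, norm_neg]
    exact (norm_sum_le _ _).trans <|
      Finset.sum_le_univ_sum_of_nonneg fun j ↦ norm_nonneg (l j)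
  rw [map_pow, eval_shiftFactor]
  exact inv_prod_norm_sq_le hk hkl hshift

/-- **Lemma.** There is a polynomial `P ∈ ℝ[X₁,…,X_p]` of degree `4p` with positive
coefficients (one may take `P = 5^p (1 + 4(X₁+⋯+X_p)^4)^p`) such that for every
`k ∈ ℤⁿ` and `l ∈ (ℤⁿ)^p` with `k ≠ 0` and `k ≠ −l̂ᵢ` for all `i`,
`1/(|k+l̂₁|² ⋯ |k+l̂_p|²) ≤ P(|l₁|,…,|l_p|)/|k|^{2p}`. -/
theorem inv_prod_norm_bound (n p : ℕ) (hn : 0 < n) (hp : 0 < p) :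
    ∃ P : MvPolynomial (Fin p) ℝ,
      P.totalDegree = 4 * p ∧
      (∀ m ∈ P.support, 0 < P.coeff m) ∧
      ∀ (k : Fin n → ℤ) (l : Fin p → Fin n → ℤ),
        k ≠ 0 → (∀ i : Fin p, k ≠ -(lhat l i)) →
        (∏ i : Fin p, znorm (k + lhat l i) ^ 2)⁻¹ ≤
          MvPolynomial.eval (fun j => znorm (l j)) P / znorm k ^ (2 * p) := by
  have : Nonempty (Fin p) := ⟨⟨0, hp⟩⟩
  obtain ⟨P, hdeg, hcoeff, hP⟩ := inv_prod_norm_bound_general (Fin p) (Fin p)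
  refine ⟨P, by simpa using hdeg, hcoeff, fun k l hk hl ↦ ?_⟩
  have hkl (i : Fin p) : 1 ≤ znorm (k + lhat l i) :=
    one_le_znorm fun h ↦ hl i (eq_neg_of_add_eq_zero_left h)
  simpa [norm_intToEuclidean, norm_intToEuclidean_add_sum] using
    hP (intToEuclidean n k) (fun j ↦ intToEuclidean n (l j)) Finset.Iic
      (by simpa [norm_intToEuclidean] using one_pos.trans_le (one_le_znorm hk))
      (by simpa [norm_intToEuclidean_add_sum] using hkl)

end
end
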